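/- Fix m ≥ 1 and let c = c_{m−1} c_{m−2} … c_0 be an ST-admissible word of length m over Fin 4, with position i counted from the right and lexicographic comparison of words performed on positions m−1, m−2, … (leftmost most significant) in the level order 0 < 1 < 2 < 3. Let g(c) be the number of ST-admissible words of length m that are lexicographically smaller than c. For each i define y_{i,1},…,y_{i,5} ∈ {0,1} as follows, where a condition referring to a position ≥ m is false, except that conditions of the form 'c_{i+2} ≠ 0' are regarded as true when position i+2 does not exist: y_{i,1} = 1 iff (i = m−1 and c_i = 1) or (c_{i+1},c_i) = (0,2) or (c_{i+1},c_i) = (2,2); y_{i,2} = 1 iff (i = m−1 and c_i = 2) or (c_{i+1},c_i) = (0,3); y_{i,3} = 1 iff i = m−1 and c_i = 3; y_{i,4} = 1 iff (c_{i+1},c_i) = (1,3), or (c_{i+2},c_{i+1},c_i) = (0,3,3), or ((c_{i+1},c_i) = (3,1) and c_{i+2} ≠ 0); y_{i,5} = 1 iff (c_{i+1},c_i) = (3,3) and c_{i+2} ≠ 0. Set θ_{i,1} = y_{i,1} + y_{i,3} + y_{i,4}, θ_{i,2} = y_{i,2} + y_{i,3} + y_{i,5}, θ_{i,3} = y_{i,1}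 + y_{i,2} + y_{i,3}. Then, as an identity of rational numbers, g(c) = Σ_{i=0}^{m−1} [ (θ_{i,1}/2 + θ_{i,2})·N4(i) + (θ_{i,3}/2)·N4(i−1) ]. -/

import Mathlib

/-!
Enumerative coding (Cover): a word smaller than `c` first deviates from `c`, reading from the left,
at a unique position `i`, where it carries an admissible letter `a < c i`, and it continues with
an arbitrary admissible completion of length `i`. So the index of `c` is a sum of completion counts.

For `ST⁴` the number of completions of length `i` depends only on whether two or three letters may
follow `a`, given the letter before it: it is `N4 i / 2` in the former case and
`(N4 i + N4 (i - 1)) / 2` in the latter. Hence position `i` contributes `N4 i / 2` for each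
admissible `a < c i` and a further `N4 (i - 1) / 2` for each such `a` with three successors. The
merging variables count these letters: there are `θ₁ + 2 θ₂` of the former and `θ₃` of the latter.
-/

namespace STLOCO

/-- Forbidden 2-tuples of `ST⁴`, read left-to-right. -/
def STpair (a b : Fin 4) : Prop :=
  (a = 0 ∧ b = 1) ∨ (a = 1 ∧ b = 0) ∨ (a = 1 ∧ b = 2) ∨
  (a = 2 ∧ b = 1) ∨ (a = 2 ∧ b = 3) ∨ (a = 3 ∧ b = 2)

/-- Forbidden 3-tuples of `ST⁴`, read left-to-right. -/
def STtriple (a x b : Fin 4) : Prop :=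
  (a = 0 ∧ x = 3 ∧ b = 0) ∨ (a = 3 ∧ x = 0 ∧ b = 3)

instance (a b : Fin 4) : Decidable (STpair a b) := by unfold STpair; infer_instance
instance (a x b : Fin 4) : Decidable (STtriple a x b) := by unfold STtriple; infer_instance

/-- Right-indexed ST-admissibility: `c i` is the symbol at position `i` counted from the
right (`c (m−1)` is the leftmost symbol), and forbidden patterns are read left-to-right,
i.e. from higher positions towards lower positions. -/
def STadmR {m : ℕ} (c : Fin m → Fin 4) : Prop :=
  (∀ i j : Fin m, (i : ℕ) = (j : ℕ) + 1 → ¬ STpair (c i) (c j)) ∧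
  (∀ i j k : Fin m, (i : ℕ) = (k : ℕ) + 2 → (j : ℕ) = (k : ℕ) + 1 →
    ¬ STtriple (c i) (c j) (c k))

instance {m : ℕ} : DecidablePred (@STadmR m) := fun c => by
  unfold STadmR; infer_instance

/-- Number of ST-admissible words of length `m`, with the convention `N4 0 = 2`. -/
def N4 (m : ℕ) : ℕ :=
  if m = 0 then 2
  else (Finset.univ.filter (fun w : Fin m → Fin 4 => STadmR w)).card

/-- `N4 (i − 1)` with the convention `N4 (−1) = 0`. -/
def N4pred : ℕ → ℕ
  | 0 => 0
  | k + 1 => N4 k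

/-- Lexicographic order on right-indexed words: the leftmost (highest-index) position
is the most significant, and symbols are compared in the level order `0 < 1 < 2 < 3`. -/
def lexLt {m : ℕ} (u v : Fin m → Fin 4) : Prop :=
  ∃ i : Fin m, u i < v i ∧ ∀ j : Fin m, i < j → u j = v j

instance {m : ℕ} (u v : Fin m → Fin 4) : Decidable (lexLt u v) := by
  unfold lexLt; infer_instance

/-- The lexicographic index of `c`: the number of ST-admissible words of length `m`
that are lexicographically smaller than `c`. -/
def gIndex {m : ℕ} (c : Fin m → Fin 4) : ℕ :=
  (Finset.univ.filter (fun w : Fin m → Fin 4 => STadmR w ∧ lexLt w c)).card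

/-- The symbol at (right-counted) position `k`, or `none` if `k ≥ m`. -/
def copt {m : ℕ} (c : Fin m → Fin 4) (k : ℕ) : Option (Fin 4) :=
  if h : k < m then some (c ⟨k, h⟩) else none

/-- Merging variable `y_{i,1}`. -/
def y1 {m : ℕ} (c : Fin m → Fin 4) (i : Fin m) : ℕ :=
  if ((i : ℕ) + 1 = m ∧ c i = 1) ∨ (copt c ((i : ℕ) + 1) = some 0 ∧ c i = 2) ∨
      (copt c ((i : ℕ) + 1) = some 2 ∧ c i = 2) then 1 else 0

/-- Merging variable `y_{i,2}`. -/
def y2 {m : ℕ} (c : Fin m → Fin 4) (i : Fin m) : ℕ :=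
  if ((i : ℕ) + 1 = m ∧ c i = 2) ∨ (copt c ((i : ℕ) + 1) = some 0 ∧ c i = 3) then 1 else 0

/-- Merging variable `y_{i,3}`. -/
def y3 {m : ℕ} (c : Fin m → Fin 4) (i : Fin m) : ℕ :=
  if (i : ℕ) + 1 = m ∧ c i = 3 then 1 else 0

/-- Merging variable `y_{i,4}`; a condition `c_{i+2} ≠ 0` is regarded as true when
position `i+2` does not exist. -/
def y4 {m : ℕ} (c : Fin m → Fin 4) (i : Fin m) : ℕ :=
  if (copt c ((i : ℕ) + 1) = some 1 ∧ c i = 3) ∨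
      (copt c ((i : ℕ) + 2) = some 0 ∧ copt c ((i : ℕ) + 1) = some 3 ∧ c i = 3) ∨
      (copt c ((i : ℕ) + 1) = some 3 ∧ c i = 1 ∧ copt c ((i : ℕ) + 2) ≠ some 0)
    then 1 else 0

/-- Merging variable `y_{i,5}`; the condition `c_{i+2} ≠ 0` is regarded as true when
position `i+2` does not exist. -/
def y5 {m : ℕ} (c : Fin m → Fin 4) (i : Fin m) : ℕ :=
  if copt c ((i : ℕ) + 1) = some 3 ∧ c i = 3 ∧ copt c ((i : ℕ) + 2) ≠ some 0
    then 1 else 0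

def stTheta1 {m : ℕ} (c : Fin m → Fin 4) (i : Fin m) : ℕ := y1 c i + y3 c i + y4 c i
def stTheta2 {m : ℕ} (c : Fin m → Fin 4) (i : Fin m) : ℕ := y2 c i + y3 c i + y5 c i
def stTheta3 {m : ℕ} (c : Fin m → Fin 4) (i : Fin m) : ℕ := y1 c i + y2 c i + y3 c i

section EnumerativeCoding

open scoped Finset

variable {α : Type*}

/-- The letter at position `j`, counted from the right, of the word obtained by writing the letters
`p` and `q`, either of which may be absent, to the left of `w`; so `q` is adjacent to `w`. -/
def letterAt (p q : Option α) {k : ℕ} (w : Fin k → α) (j : ℕ) : Option α :=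
  if h : j < k then some (w ⟨j, h⟩) else if j = k then q else if j = k + 1 then p else none

/-- Admissibility, in the context of the letters `p` and `q` to its left, of a word subject to a
constraint of memory two: `ok x y a` says that `a` may follow `y`, which itself follows `x`. -/
def Admissible (ok : Option α → Option α → α → Prop) (p q : Option α) {k : ℕ} (w : Fin k → α) :
    Prop :=
  ∀ i : Fin k, ok (letterAt p q w (i + 2)) (letterAt p q w (i + 1)) (w i)

instance (ok : Option α → Option α → α → Prop) [∀ p q, DecidablePred (ok p q)] (p q : Option α)
    {k : ℕ} : DecidablePred (Admissible ok p q (k := k)) := fun w => by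
  unfold Admissible; infer_instance

lemma letterAt_snoc (p q : Option α) {k : ℕ} (w : Fin k → α) (a : α) {j : ℕ} (hj : j ≤ k + 1) :
    letterAt p q (Fin.snoc w a : Fin (k + 1) → α) j = letterAt q (some a) w j := by
  obtain hlt | rfl | rfl : j < k ∨ j = k ∨ j = k + 1 := by omega
  · simp [letterAt, Fin.snoc, hlt, Nat.lt_succ_of_lt hlt]
  · simp [letterAt, Fin.snoc]
  · simp [letterAt]

variable {ok : Option α → Option α → α → Prop}

lemma admissible_snoc {p q : Option α} {k : ℕ} {w : Fin k → α} {a : α} :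
    Admissible ok p q (Fin.snoc w a : Fin (k + 1) → α) ↔
      ok p q a ∧ Admissible ok q (some a) w := by
  unfold Admissible
  rw [Fin.forall_fin_succ', and_comm]
  refine and_congr ?_ (forall_congr' fun i => ?_)
  · simp [letterAt]
  · rw [letterAt_snoc _ _ _ _ (by simp), letterAt_snoc _ _ _ _ (by lia)]
    simp

lemma toColex_snoc_lt_snoc [LT α] {k : ℕ} {u v : Fin k → α} {a b : α} :
    toColex (Fin.snoc u a : Fin (k + 1) → α) < toColex (Fin.snoc v b : Fin (k + 1) → α) ↔
      a < b ∨ a = b ∧ toColex u < toColex v := by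
  change (∃ i, _) ↔ _ ∨ _ ∧ ∃ i, _
  rw [Fin.exists_fin_succ', or_comm]
  refine or_congr ?_ ?_
  · simp [Fin.not_lt.2 (Fin.le_last _)]
  · simp [Fin.forall_fin_succ', and_right_comm (b := a = b), and_comm (a := a = b)]

variable [Fintype α]

lemma card_filter_snoc {k : ℕ} (P : (Fin (k + 1) → α) → Prop) [DecidablePred P] :
    #{w | P w} = ∑ a, #{w : Fin k → α | P (Fin.snoc w a)} := by
  simp only [Finset.card_filter]
  rw [← Fintype.sum_prod_type' (f := fun a w => if P (Fin.snoc w a) then 1 else 0)]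
  exact (Fintype.sum_equiv (Fin.snocEquiv fun _ => α) _ _ fun _ => rfl).symm

variable (ok) [∀ p q, DecidablePred (ok p q)]

/-- The number of admissible words of length `k` in the context of the letters `p` and `q` to
their left. -/
def completionCount (k : ℕ) (p q : Option α) : ℕ :=
  #{w : Fin k → α | Admissible ok p q w}

lemma completionCount_zero (p q : Option α) : completionCount ok 0 p q = 1 := by
  simp [completionCount, Admissible]

lemma completionCount_succ (k : ℕ) (p q : Option α) :
    completionCount ok (k + 1) p q = ∑ a with ok p q a, completionCount ok k q (some a) := by
  unfold completionCount
  rw [card_filter_snoc, Finset.sum_filter]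
  refine Finset.sum_congr rfl fun a _ => ?_
  by_cases ha : ok p q a <;> simp [admissible_snoc, ha]

open Classical in
/-- The index of `c` among the admissible words of its length in the context of the letters `p` and
`q` to their left. Positions are counted from the right, so the lexicographic order with the
leftmost letter most significant is the colexicographic order of functions. -/
noncomputable def lexIndex [LT α] (p q : Option α) {k : ℕ} (c : Fin k → α) : ℕ :=
  #{w : Fin k → α | Admissible ok p q w ∧ toColex w < toColex c}

variable {ok} [LinearOrder α]

lemma lexIndex_snoc {p q : Option α} {k : ℕ} (c : Fin k → α) {b : α} (hb : ok p q b) :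
    lexIndex ok p q (Fin.snoc c b : Fin (k + 1) → α) =
      (∑ a with a < b ∧ ok p q a, completionCount ok k q (some a)) +
        lexIndex ok q (some b) c := by
  classical
  have split_letter (a : α) :
      #{w : Fin k → α | Admissible ok p q (Fin.snoc w a : Fin (k + 1) → α) ∧
        toColex (Fin.snoc w a : Fin (k + 1) → α) < toColex (Fin.snoc c b : Fin (k + 1) → α)} =
      (if a < b ∧ ok p q a then completionCount ok k q (some a) else 0) +
        if a = b then lexIndex ok q (some a) c else 0 := by
    simp only [admissible_snoc, toColex_snoc_lt_snoc, completionCount, lexIndex]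
    rcases lt_trichotomy a b with hlt | rfl | hgt
    · by_cases ha : ok p q a <;> simp [hlt, hlt.ne, ha]
    · simp [hb]
    · simp [hgt.ne', hgt.not_gt]
  rw [lexIndex, card_filter_snoc, Finset.sum_congr rfl fun a _ => split_letter a,
    Finset.sum_add_distrib, ← Finset.sum_filter, Fintype.sum_ite_eq']

theorem lexIndex_eq_sum_completionCount {p q : Option α} {k : ℕ} {c : Fin k → α}
    (hc : Admissible ok p q c) :
    lexIndex ok p q c =
      ∑ i : Fin k, ∑ a with a < c i ∧ ok (letterAt p q c (i + 2)) (letterAt p q c (i + 1)) a,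
        completionCount ok i (letterAt p q c (i + 1)) (some a) := by
  induction c using Fin.snocInduction generalizing p q with
  | elim0 =>
    have not_lt_elim0 (w : Fin 0 → α) : ¬toColex w < toColex (Fin.elim0 : Fin 0 → α) :=
      fun ⟨i, _⟩ => i.elim0
    simp [lexIndex, not_lt_elim0]
  | snoc c b ih =>
    obtain ⟨hb, hc⟩ := admissible_snoc.1 hc
    rw [lexIndex_snoc c hb, ih hc, Fin.sum_univ_castSucc, add_comm]
    congr 1
    · refine Finset.sum_congr rfl fun i _ => ?_
      rw [letterAt_snoc _ _ _ _ (by simp), letterAt_snoc _ _ _ _ (by lia)]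
      simp
    · simp [letterAt]

end EnumerativeCoding

section CompletionCounts

open scoped Finset

/-- The `ST⁴` constraint on a letter `a` preceded by `q`, which is itself preceded by `p`. -/
def STallowed (p q : Option (Fin 4)) (a : Fin 4) : Prop :=
  (∀ y ∈ q, ¬ STpair y a) ∧ ∀ x ∈ p, ∀ y ∈ q, ¬ STtriple x y a

instance (p q : Option (Fin 4)) : DecidablePred (STallowed p q) := fun a => by
  unfold STallowed; infer_instance

/-- Whether the letter `a`, preceded by `p`, may be followed by three letters; otherwise it may be
followed by two only, see `card_successors`. -/
def HasThreeSuccessors (p : Option (Fin 4)) (a : Fin 4) : Prop :=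
  (a = 0 ∧ p ≠ some 3) ∨ (a = 3 ∧ p ≠ some 0)

instance (p : Option (Fin 4)) : DecidablePred (HasThreeSuccessors p) := fun a => by
  unfold HasThreeSuccessors; infer_instance

lemma card_successors (p : Option (Fin 4)) (a : Fin 4) :
    #{b | STallowed p (some a) b} = if HasThreeSuccessors p a then 3 else 2 := by
  decide +revert

lemma card_hasThreeSuccessors_successors (p : Option (Fin 4)) (a : Fin 4) :
    #{b ∈ ({b | STallowed p (some a) b} : Finset (Fin 4)) | HasThreeSuccessors (some a) b} = 1 := by
  decide +revert

lemma card_hasThreeSuccessors_none : #{a | HasThreeSuccessors none a} = 2 := by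
  decide

lemma sum_add_ite_zero {ι M : Type*} [AddCommMonoid M] (s : Finset ι) (P : ι → Prop)
    [DecidablePred P] (x y : M) :
    ∑ a ∈ s, (x + if P a then y else 0) = #s • x + #{a ∈ s | P a} • y := by
  rw [Finset.sum_add_distrib, ← Finset.sum_filter, Finset.sum_const, Finset.sum_const]

lemma letterAt_none_none {m : ℕ} (c : Fin m → Fin 4) (j : ℕ) :
    letterAt none none c j = copt c j := by
  unfold letterAt copt
  split_ifs <;> rfl

lemma copt_eq_some_iff {m : ℕ} {c : Fin m → Fin 4} {j : ℕ} {a : Fin 4} :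
    copt c j = some a ↔ ∃ h : j < m, c ⟨j, h⟩ = a := by
  simp [copt]

lemma STadmR_iff_admissible {m : ℕ} {c : Fin m → Fin 4} :
    STadmR c ↔ Admissible STallowed none none c := by
  simp only [STadmR, Admissible, STallowed, letterAt_none_none, Option.mem_def, copt_eq_some_iff,
    forall_and]
  refine and_congr ⟨?_, ?_⟩ ⟨?_, ?_⟩
  · rintro pair_free i _ ⟨_, rfl⟩
    exact pair_free _ _ rfl
  · rintro pair_free ⟨_, hi⟩ j rfl
    exact pair_free j _ ⟨hi, rfl⟩
  · rintro triple_free i _ ⟨_, rfl⟩ _ ⟨_, rfl⟩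
    exact triple_free _ _ _ rfl rfl
  · rintro triple_free ⟨_, hi⟩ ⟨_, hj⟩ k rfl rfl
    exact triple_free k _ ⟨hi, rfl⟩ _ ⟨hj, rfl⟩

lemma N4_succ_eq_sum (k : ℕ) : N4 (k + 1) = ∑ a, completionCount STallowed k none (some a) := by
  have N4_eq : N4 (k + 1) = completionCount STallowed (k + 1) none none := by
    simp [N4, completionCount, STadmR_iff_admissible]
  simp [N4_eq, completionCount_succ, STallowed]

lemma two_mul_completionCount (k : ℕ) (p : Option (Fin 4)) (a : Fin 4) :
    2 * completionCount STallowed k p (some a) =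
      N4 k + if HasThreeSuccessors p a then N4pred k else 0 := by
  induction k generalizing p a with
  | zero => simp [completionCount_zero, N4, N4pred]
  | succ k ih =>
    have N4_recurrence : N4 (k + 1) = 2 * N4 k + N4pred k := by
      refine Nat.eq_of_mul_eq_mul_left two_pos ?_
      rw [N4_succ_eq_sum, Finset.mul_sum]
      simp only [ih, sum_add_ite_zero, card_hasThreeSuccessors_none, Finset.card_univ,
        Fintype.card_fin, smul_eq_mul]
      ring
    rw [completionCount_succ, Finset.mul_sum, N4_recurrence, N4pred]
    simp only [ih, sum_add_ite_zero, card_successors, card_hasThreeSuccessors_successors,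
      smul_eq_mul]
    split_ifs <;> ring

lemma two_mul_sum_completionCount (k : ℕ) (p : Option (Fin 4)) (s : Finset (Fin 4)) :
    2 * ∑ a ∈ s, completionCount STallowed k p (some a) =
      #s * N4 k + #{a ∈ s | HasThreeSuccessors p a} * N4pred k := by
  simp only [Finset.mul_sum, two_mul_completionCount, sum_add_ite_zero, smul_eq_mul]

end CompletionCounts

section MergingVariables

open scoped Finset

variable {m : ℕ} {c : Fin m → Fin 4}

/-- The letters smaller than `c i` that may follow the letters of `c` to the left of position `i`;
these are the letters by which a smaller admissible word can first deviate from `c` at `i`. -/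
def smallerLetters (c : Fin m → Fin 4) (i : Fin m) : Finset (Fin 4) :=
  {a | a < c i ∧ STallowed (copt c (i + 2)) (copt c (i + 1)) a}

lemma lexLt_iff_toColex_lt {u v : Fin m → Fin 4} : lexLt u v ↔ toColex u < toColex v :=
  exists_congr fun _ => and_comm

lemma gIndex_eq_sum_completionCount (hc : STadmR c) :
    gIndex c =
      ∑ i : Fin m, ∑ a ∈ smallerLetters c i,
        completionCount STallowed i (copt c (i + 1)) (some a) := by
  have gIndex_eq : gIndex c = lexIndex STallowed none none c := by
    rw [gIndex, lexIndex]
    congr! 3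
    exacts [STadmR_iff_admissible, lexLt_iff_toColex_lt]
  rw [gIndex_eq, lexIndex_eq_sum_completionCount (STadmR_iff_admissible.1 hc)]
  simp only [letterAt_none_none, smallerLetters]

lemma STadmR.stallowed (hc : STadmR c) (i : Fin m) :
    STallowed (copt c (i + 2)) (copt c (i + 1)) (c i) := by
  simpa only [letterAt_none_none] using STadmR_iff_admissible.1 hc i

lemma val_add_one_eq_iff_copt_eq_none {i : Fin m} : (i : ℕ) + 1 = m ↔ copt c (i + 1) = none := by
  rw [copt, dite_eq_right_iff]
  simp only [reduceCtorEq, imp_false]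
  lia

lemma card_smallerLetters (hc : STadmR c) (i : Fin m) :
    #(smallerLetters c i) = stTheta1 c i + 2 * stTheta2 c i := by
  have allowed := hc.stallowed i
  simp only [smallerLetters, stTheta1, stTheta2, y1, y2, y3, y4, y5,
    val_add_one_eq_iff_copt_eq_none (c := c)]
  generalize copt c (i + 2) = p, copt c (i + 1) = q, c i = b at *
  decide +revert

lemma card_hasThreeSuccessors_smallerLetters (hc : STadmR c) (i : Fin m) :
    #{a ∈ smallerLetters c i | HasThreeSuccessors (copt c (i + 1)) a} = stTheta3 c i := by
  have allowed := hc.stallowed i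
  simp only [smallerLetters, stTheta3, y1, y2, y3, val_add_one_eq_iff_copt_eq_none (c := c)]
  generalize copt c (i + 2) = p, copt c (i + 1) = q, c i = b at *
  decide +revert

end MergingVariables

theorem st_encoding_decoding_rule (m : ℕ) (hm : 1 ≤ m) (c : Fin m → Fin 4)
    (hc : STadmR c) :
    (gIndex c : ℚ) =
      ∑ i : Fin m,
        (((stTheta1 c i : ℚ) / 2 + (stTheta2 c i : ℚ)) * (N4 (i : ℕ) : ℚ) +
          (stTheta3 c i : ℚ) / 2 * (N4pred (i : ℕ) : ℚ)) := by
  rw [gIndex_eq_sum_completionCount hc, Nat.cast_sum]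
  refine Finset.sum_congr rfl fun i _ => ?_
  have twice_term := two_mul_sum_completionCount i (copt c (i + 1)) (smallerLetters c i)
  rw [card_smallerLetters hc, card_hasThreeSuccessors_smallerLetters hc] at twice_term
  qify at twice_term ⊢
  linarith

end STLOCO
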